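/- Let (X,d) be a proper geodesic metric space, φ : X → ℝ a Kantorovich potential, and γ a φ-Kantorovich geodesic with ℓ := ℓ(γ) > 0. Let z_c : (0,1) → ℝ be continuous, and assume that for Lebesgue-a.e. t ∈ (0,1), both maps τ ↦ φ_τ(γ_t) and τ ↦ φ̄_τ(γ_t) have a second Peano derivative at τ = t equal to z_c(t). Then: (i) for every t ∈ (0,1), both maps have a second Peano derivative at τ = t equal to z_c(t); (ii) for all 0 < s < t < 1, (z_c(t) − z_c(s))/(t − s) ≥ √((s/t)·((1−t)/(1−s)))·|z_c(s)|·|z_c(t)|/ℓ²; (iii) at any point t ∈ (0,1) where z_c is differentiable, z_c′(t) ≥ z_c(t)²/ℓ². -/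

import Mathlib

/-- `ψ` is pointwise the `c`-transform of `φ` for the cost `c = d²/2`:
at every point `x`, `ψ x` is a genuine (finite) infimum of `d(x,y)²/2 - φ(y)` over `y`. -/
def IsCTransform {X : Type*} [MetricSpace X] (φ ψ : X → ℝ) : Prop :=
  ∀ x : X, IsGLB {v : ℝ | ∃ y : X, v = dist x y ^ 2 / 2 - φ y} (ψ x)

/-- `φ` is a Kantorovich potential with (real-valued) conjugate potential `φc`. -/
def IsKantorovichPair {X : Type*} [MetricSpace X] (φ φc : X → ℝ) : Prop :=
  IsCTransform φ φc ∧ IsCTransform φc φ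

/-- A constant-speed geodesic parametrized on `[0,1]`. -/
def IsGeodesic {X : Type*} [MetricSpace X] (γ : ℝ → X) : Prop :=
  ∀ s ∈ Set.Icc (0:ℝ) 1, ∀ t ∈ Set.Icc (0:ℝ) 1,
    dist (γ s) (γ t) = |s - t| * dist (γ 0) (γ 1)

/-- A `φ`-Kantorovich geodesic: a geodesic with `φ(γ₀) + φ^c(γ₁) = ℓ(γ)²/2`,
where `ℓ(γ) = d(γ₀,γ₁)`. -/
def IsKantorovichGeodesic {X : Type*} [MetricSpace X] (φ φc : X → ℝ) (γ : ℝ → X) : Prop :=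
  IsGeodesic γ ∧ φ (γ 0) + φc (γ 1) = dist (γ 0) (γ 1) ^ 2 / 2

/-- A metric space is geodesic if every pair of points is joined by a geodesic. -/
def IsGeodesicSpace (X : Type*) [MetricSpace X] : Prop :=
  ∀ x y : X, ∃ γ : ℝ → X, IsGeodesic γ ∧ γ 0 = x ∧ γ 1 = y

/-- The interpolating intermediate-time Kantorovich potential
`φ_t(x) = -inf_y (d(x,y)²/(2t) - φ(y))` for `t ≠ 0`, and `φ_0 = φ`. -/
noncomputable def interpPotential {X : Type*} [MetricSpace X] (φ : X → ℝ) (t : ℝ) (x : X) : ℝ :=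
  if t = 0 then φ x
  else -sInf {v : ℝ | ∃ y : X, v = dist x y ^ 2 / (2 * t) - φ y}

/-- The time-reversed interpolating Kantorovich potential
`φ̄_t(x) = inf_y (d(x,y)²/(2(1-t)) - φ^c(y))` for `t ≠ 1`, and `φ̄_1 = -φ^c`. -/
noncomputable def reversePotential {X : Type*} [MetricSpace X] (φc : X → ℝ) (t : ℝ) (x : X) : ℝ :=
  if t = 1 then -φc x
  else sInf {v : ℝ | ∃ y : X, v = dist x y ^ 2 / (2 * (1 - t)) - φc y}

/-- `g` has a second Peano derivative `q` at `τ₀`: it is differentiable at `τ₀` (with some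
derivative `d`) and `g(τ₀+ε) = g(τ₀) + d·ε + q·ε²/2 + o(ε²)` as `ε → 0`. -/
def HasSecondPeanoDerivAt (g : ℝ → ℝ) (q : ℝ) (τ₀ : ℝ) : Prop :=
  ∃ d : ℝ, HasDerivAt g d τ₀ ∧
    Asymptotics.IsLittleO (nhds (0 : ℝ))
      (fun ε : ℝ => g (τ₀ + ε) - g τ₀ - d * ε - q * ε ^ 2 / 2)
      (fun ε : ℝ => ε ^ 2)

/-!
Write `g t τ` for the potential of time `τ` at `γ t`, and `ℓ` for the length of `γ`. The
Hopf-Lax inequality `g s a ≤ g t b + ℓ² (t - s)² / (2 (b - a))` is an equality at `a = s`,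
`b = t`, so its gap has a local minimum there. The first-order condition at this minimum forces
`∂_τ g t t = ℓ² / 2` for every `t`. Taking `b - a = t - s` shows that the increment
`g t (t + ε) - g t t` is monotone in `t`; squeezing it between the increments at nearby good
times and using continuity of `z` gives the expansion at every time. The second-order condition
says that `z t u² - z s v² + ℓ² (u - v)² / (t - s)` is a nonnegative quadratic form in `(u, v)`;
its determinant gives `z s z t (t - s) ≤ ℓ² (z t - z s)`, which is the claim when `z s` and `z t`
have the same sign and yields the differential inequality. When the signs differ one also needs
`-ℓ² ≤ s z s` and `(1 - t) z t ≤ ℓ²`, the limits of the diagonal coefficients as the other time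
tends to an endpoint.
-/

open Set Filter Topology MeasureTheory Asymptotics

/-! ### Second-order Peano expansions -/

/-- The second-order expansion `g (τ₀ + ε) = g τ₀ + d ε + q ε² / 2 + o(ε²)`, with its first-order
coefficient `d` explicit; `HasSecondPeanoDerivAt g q τ₀` says that such a `d` exists. -/
def HasPeanoExpansionAt (g : ℝ → ℝ) (d q τ₀ : ℝ) : Prop :=
  (fun ε : ℝ => g (τ₀ + ε) - g τ₀ - d * ε - q * ε ^ 2 / 2) =o[𝓝 0] fun ε : ℝ => ε ^ 2

namespace HasPeanoExpansionAt

variable {f g : ℝ → ℝ} {d d' q q' τ₀ : ℝ}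

theorem hasDerivAt (h : HasPeanoExpansionAt g d q τ₀) : HasDerivAt g d τ₀ := by
  have sq_isLittleO : (fun ε : ℝ => ε ^ 2) =o[𝓝 0] fun ε : ℝ => ε := by
    simpa using isLittleO_pow_pow (𝕜 := ℝ) one_lt_two
  rw [hasDerivAt_iff_isLittleO_nhds_zero]
  refine ((h.trans sq_isLittleO).add (sq_isLittleO.const_mul_left (q / 2))).congr_left fun ε => ?_
  simp only [smul_eq_mul]
  ring

theorem hasSecondPeanoDerivAt (h : HasPeanoExpansionAt g d q τ₀) : HasSecondPeanoDerivAt g q τ₀ :=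
  ⟨d, h.hasDerivAt, h⟩

theorem add (hf : HasPeanoExpansionAt f d q τ₀) (hg : HasPeanoExpansionAt g d' q' τ₀) :
    HasPeanoExpansionAt (fun τ => f τ + g τ) (d + d') (q + q') τ₀ :=
  (IsLittleO.add hf hg).congr_left fun ε => by ring

theorem const_mul (hf : HasPeanoExpansionAt f d q τ₀) (c : ℝ) :
    HasPeanoExpansionAt (fun τ => c * f τ) (c * d) (c * q) τ₀ :=
  (IsLittleO.const_mul_left hf c).congr_left fun ε => by ring

theorem sub (hf : HasPeanoExpansionAt f d q τ₀) (hg : HasPeanoExpansionAt g d' q' τ₀) :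
    HasPeanoExpansionAt (fun τ => f τ - g τ) (d - d') (q - q') τ₀ :=
  (IsLittleO.sub hf hg).congr_left fun ε => by ring

theorem comp_add_mul (hf : HasPeanoExpansionAt f d q τ₀) (u : ℝ) :
    HasPeanoExpansionAt (fun x => f (τ₀ + u * x)) (d * u) (q * u ^ 2) 0 := by
  have hu : Tendsto (fun x : ℝ => u * x) (𝓝 0) (𝓝 0) := by
    simpa using (continuous_const_mul u).tendsto 0
  have hsq : (fun x : ℝ => (u * x) ^ 2) =O[𝓝 0] fun x : ℝ => x ^ 2 := by
    simpa only [mul_pow] using (isBigO_refl (fun x : ℝ => x ^ 2) (𝓝 0)).const_mul_left (u ^ 2)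
  refine ((hf.comp_tendsto hu).trans_isBigO hsq).congr_left fun x => ?_
  simp only [Function.comp_apply, mul_zero, zero_add, add_zero]
  ring

end HasPeanoExpansionAt

theorem hasPeanoExpansionAt_inv {a : ℝ} (ha : a ≠ 0) :
    HasPeanoExpansionAt (fun τ => τ⁻¹) (-(a ^ 2)⁻¹) (2 * (a ^ 3)⁻¹) a := by
  have remainder_tendsto : Tendsto (fun ε : ℝ => -ε / (a ^ 3 * (a + ε))) (𝓝 0) (𝓝 0) := by
    have : ContinuousAt (fun ε : ℝ => -ε / (a ^ 3 * (a + ε))) 0 := by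
      have : a ^ 3 * (a + 0) ≠ 0 := by simpa using ha
      fun_prop (disch := assumption)
    simpa using this.tendsto
  have remainder_isLittleO := ((isLittleO_one_iff ℝ).2 remainder_tendsto).mul_isBigO
    (isBigO_refl (fun ε : ℝ => ε ^ 2) (𝓝 0))
  refine remainder_isLittleO.congr' ?_ (by simp)
  have : ∀ᶠ ε in 𝓝 (0 : ℝ), a + ε ≠ 0 :=
    (show ContinuousAt (fun ε : ℝ => a + ε) 0 by fun_prop).eventually_ne (by simpa using ha)
  filter_upwards [this] with ε hε
  field_simp
  ring

theorem hasPeanoExpansionAt_iff_eventually {g : ℝ → ℝ} {d q τ₀ : ℝ} :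
    HasPeanoExpansionAt g d q τ₀ ↔
      (∀ p < q, ∀ᶠ ε in 𝓝 0, d * ε + p * ε ^ 2 / 2 ≤ g (τ₀ + ε) - g τ₀) ∧
      (∀ p > q, ∀ᶠ ε in 𝓝 0, g (τ₀ + ε) - g τ₀ ≤ d * ε + p * ε ^ 2 / 2) := by
  simp only [HasPeanoExpansionAt, isLittleO_iff, Real.norm_eq_abs, abs_sq, abs_le]
  constructor
  · refine fun h => ⟨fun p hp => ?_, fun p hp => ?_⟩
    · filter_upwards [h (half_pos (sub_pos.2 hp))] with ε hε
      linarith [hε.1]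
    · filter_upwards [h (half_pos (sub_pos.2 hp))] with ε hε
      linarith [hε.2]
  · rintro ⟨hlower, hupper⟩ c hc
    filter_upwards [hlower (q - 2 * c) (by linarith), hupper (q + 2 * c) (by linarith)]
      with ε hl hu
    constructor <;> linarith

theorem HasPeanoExpansionAt.nonneg_of_isLocalMin {g : ℝ → ℝ} {d q τ₀ : ℝ}
    (h : HasPeanoExpansionAt g d q τ₀) (hmin : IsLocalMin g τ₀) : 0 ≤ q := by
  by_contra! hq
  obtain ⟨p, hqp, hp⟩ := exists_between hq
  have hd : d = 0 := hmin.hasDerivAt_eq_zero h.hasDerivAt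
  have hshift : Tendsto (fun ε : ℝ => τ₀ + ε) (𝓝 0) (𝓝 τ₀) := by
    simpa using (continuous_const_add τ₀).tendsto 0
  have hnear : ∀ᶠ ε in 𝓝[≠] (0 : ℝ), g (τ₀ + ε) - g τ₀ ≤ d * ε + p * ε ^ 2 / 2 ∧
      g τ₀ ≤ g (τ₀ + ε) :=
    (((hasPeanoExpansionAt_iff_eventually.1 h).2 p hqp).and (hshift.eventually hmin)).filter_mono
      nhdsWithin_le_nhds
  obtain ⟨ε, ⟨hupper, hlower⟩, hε⟩ := (hnear.and self_mem_nhdsWithin).exists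
  have : p * ε ^ 2 < 0 := mul_neg_of_neg_of_pos hp (sq_pos_of_ne_zero hε)
  rw [hd] at hupper
  linarith

section Order

variable {α : Type*} [LinearOrder α] [TopologicalSpace α] [OrderTopology α] [DenselyOrdered α]

theorem frequently_nhdsGT_mem_of_dense [NoMaxOrder α] {D : Set α} (hD : Dense D) (a : α) :
    ∃ᶠ x in 𝓝[>] a, x ∈ D := by
  refine frequently_iff.2 fun hU => ?_
  obtain ⟨b, hab, hsub⟩ := mem_nhdsGT_iff_exists_Ioo_subset.1 hU
  obtain ⟨x, hxD, hx⟩ := hD.exists_between hab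
  exact ⟨x, hsub hx, hxD⟩

theorem frequently_nhdsLT_mem_of_dense [NoMinOrder α] {D : Set α} (hD : Dense D) (a : α) :
    ∃ᶠ x in 𝓝[<] a, x ∈ D := by
  refine frequently_iff.2 fun hU => ?_
  obtain ⟨b, hba, hsub⟩ := mem_nhdsLT_iff_exists_Ioo_subset.1 hU
  obtain ⟨x, hxD, hx⟩ := hD.exists_between hba
  exact ⟨x, hsub hx, hxD⟩

end Order

/-! ### The weight in the third-order inequality -/

section Weight

variable {s t p q L : ℝ}

theorem sqrt_ratio_le_one (hs : 0 < s) (hst : s ≤ t) (ht : t < 1) :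
    √(s / t * ((1 - t) / (1 - s))) ≤ 1 := by
  have ht0 : 0 < t := hs.trans_le hst
  have hs1 : 0 < 1 - s := by linarith
  refine Real.sqrt_le_one.2 (mul_le_one₀ ((div_le_one ht0).2 hst) ?_ ?_)
  · exact div_nonneg (by linarith) hs1.le
  · exact (div_le_one hs1).2 (by linarith)

theorem sqrt_ratio_mul_sub_le (hs : 0 < s) (hst : s ≤ t) (ht : t < 1) :
    √(s / t * ((1 - t) / (1 - s))) * (t - s) ≤ s + (1 - t) := by
  have ht0 : 0 < t := hs.trans_le hst
  have hs1 : 0 < 1 - s := by linarith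
  have ht1 : 0 < 1 - t := by linarith
  have hfrac : (t - s) ^ 2 / (t * (1 - s)) ≤ 1 := by
    rw [div_le_one (by positivity), sq]
    exact mul_le_mul (sub_le_self t hs.le) (by gcongr) (sub_nonneg.2 hst) ht0.le
  refine le_of_sq_le_sq ?_ (by linarith)
  calc (√(s / t * ((1 - t) / (1 - s))) * (t - s)) ^ 2
      = s * (1 - t) * ((t - s) ^ 2 / (t * (1 - s))) := by
        rw [mul_pow, Real.sq_sqrt (by positivity)]
        field_simp
    _ ≤ s * (1 - t) * 1 := by gcongr
    _ ≤ (s + (1 - t)) ^ 2 := by linarith [sq_nonneg s, sq_nonneg (1 - t), mul_pos hs ht1]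

theorem sqrt_ratio_mul_abs_mul_abs_le (hs : 0 < s) (hst : s ≤ t) (ht : t < 1)
    (hpq : p ≤ q) (hmul : p * q * (t - s) ≤ L * (q - p)) (hp : -L ≤ s * p)
    (hq : (1 - t) * q ≤ L) :
    √(s / t * ((1 - t) / (1 - s))) * (|p| * |q|) * (t - s) ≤ L * (q - p) := by
  rw [← abs_mul]
  rcases le_total 0 (p * q) with hsign | hsign
  · rw [abs_of_nonneg hsign]
    calc √(s / t * ((1 - t) / (1 - s))) * (p * q) * (t - s) ≤ 1 * (p * q) * (t - s) := by
          have := sub_nonneg.2 hst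
          gcongr
          exact sqrt_ratio_le_one hs hst ht
      _ ≤ L * (q - p) := by rwa [one_mul]
  · obtain ⟨hp0, hq0⟩ : p ≤ 0 ∧ 0 ≤ q := by
      rcases mul_nonpos_iff.1 hsign with h | h
      · exact ⟨by linarith [h.2], by linarith [h.2]⟩
      · exact h
    rw [abs_of_nonpos hsign]
    calc √(s / t * ((1 - t) / (1 - s))) * -(p * q) * (t - s)
        = -(p * q) * (√(s / t * ((1 - t) / (1 - s))) * (t - s)) := by ring
      _ ≤ -(p * q) * (s + (1 - t)) := by
          gcongr
          · exact neg_nonneg.2 hsign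
          · exact sqrt_ratio_mul_sub_le hs hst ht
      _ = q * (-(s * p)) + -p * ((1 - t) * q) := by ring
      _ ≤ q * L + -p * L := by
          gcongr
          · linarith
          · exact neg_nonneg.2 hp0
      _ = L * (q - p) := by ring

end Weight

/-! ### Hopf-Lax families -/

/-- The behaviour of potentials evolving by the Hopf-Lax semigroup, seen along a Kantorovich
geodesic `γ` of length `ℓ`: `g t τ` stands for the value at `γ t` of the potential of time `τ`.
Only intermediate times and points are constrained, so that both the interpolating and the
time-reversed potentials give such families. -/
structure IsHopfLaxFamily (ℓ : ℝ) (g : ℝ → ℝ → ℝ) : Prop where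
  diag_sub_diag : ∀ s ∈ Ioo (0 : ℝ) 1, ∀ t ∈ Ioo (0 : ℝ) 1,
    g s s - g t t = ℓ ^ 2 / 2 * (t - s)
  le_add : ∀ s ∈ Ioo (0 : ℝ) 1, ∀ t ∈ Ioo (0 : ℝ) 1, ∀ a ∈ Ioo (0 : ℝ) 1, ∀ b ∈ Ioo (0 : ℝ) 1,
    a < b → g s a ≤ g t b + ℓ ^ 2 / 2 * (t - s) ^ 2 * (b - a)⁻¹

namespace IsHopfLaxFamily

variable {ℓ : ℝ} {g : ℝ → ℝ → ℝ} {z : ℝ → ℝ} {s t : ℝ}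

theorem reverse (h : IsHopfLaxFamily ℓ g) :
    IsHopfLaxFamily ℓ fun t τ => -g (1 - t) (1 - τ) := by
  have hI (t : ℝ) (ht : t ∈ Ioo (0 : ℝ) 1) : 1 - t ∈ Ioo (0 : ℝ) 1 :=
    ⟨sub_pos.2 ht.2, sub_lt_self 1 ht.1⟩
  refine ⟨fun s hs t ht => ?_, fun s hs t ht a ha b hb hab => ?_⟩
  · linarith [h.diag_sub_diag _ (hI s hs) _ (hI t ht)]
  · have := h.le_add _ (hI t ht) _ (hI s hs) _ (hI b hb) _ (hI a ha) (by linarith)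
    rw [sub_sub_sub_cancel_left, sub_sub_sub_cancel_left] at this
    linarith

theorem isLocalMin_gap (h : IsHopfLaxFamily ℓ g) (hs : s ∈ Ioo (0 : ℝ) 1) (ht : t ∈ Ioo (0 : ℝ) 1)
    (hst : s < t) (u v : ℝ) :
    IsLocalMin (fun x => g t (t + u * x) - g s (s + v * x)
      + ℓ ^ 2 / 2 * (t - s) ^ 2 * (t - s + (u - v) * x)⁻¹) 0 := by
  have hmem {r : ℝ} (hr : r ∈ Ioo (0 : ℝ) 1) (w : ℝ) : ∀ᶠ x in 𝓝 (0 : ℝ), r + w * x ∈ Ioo 0 1 :=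
    (show ContinuousAt (fun x : ℝ => r + w * x) 0 by fun_prop).eventually_mem
      (Ioo_mem_nhds (by simpa using hr.1) (by simpa using hr.2))
  have hpos : ∀ᶠ x in 𝓝 (0 : ℝ), 0 < t - s + (u - v) * x :=
    (show ContinuousAt (fun x : ℝ => t - s + (u - v) * x) 0 by fun_prop).eventually_const_lt
      (by simpa using hst)
  have gap_zero : g t t - g s s + ℓ ^ 2 / 2 * (t - s) ^ 2 * (t - s)⁻¹ = 0 := by
    have : t - s ≠ 0 := sub_ne_zero.2 hst.ne'
    have := h.diag_sub_diag s hs t ht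
    field_simp
    linarith
  filter_upwards [hmem hs v, hmem ht u, hpos] with x hsx htx hx
  have gap_nonneg := h.le_add s hs t ht _ hsx _ htx (by linarith)
  rw [show t + u * x - (s + v * x) = t - s + (u - v) * x by ring] at gap_nonneg
  simp only [mul_zero, add_zero, gap_zero]
  linarith

theorem deriv_eq (h : IsHopfLaxFamily ℓ g) (ht : t ∈ Ioo (0 : ℝ) 1) {d : ℝ}
    (hd : HasDerivAt (g t) d t) : d = ℓ ^ 2 / 2 := by
  obtain ⟨s, hs0, hst⟩ := exists_between ht.1
  have hts : t - s ≠ 0 := sub_ne_zero.2 hst.ne'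
  have hmin := h.isLocalMin_gap ⟨hs0, hst.trans ht.2⟩ ht hst 1 0
  simp only [one_mul, zero_mul, add_zero, sub_zero] at hmin
  have gap_deriv : HasDerivAt
      (fun x => g t (t + x) - g s s + ℓ ^ 2 / 2 * (t - s) ^ 2 * (t - s + x)⁻¹)
      (d + ℓ ^ 2 / 2 * (t - s) ^ 2 * (-1 / (t - s + 0) ^ 2)) 0 :=
    ((HasDerivAt.comp_const_add t 0 (by rwa [add_zero])).sub_const _).add
      ((((hasDerivAt_id 0).const_add (t - s)).inv (by simpa using hts)).const_mul _)
  have := hmin.hasDerivAt_eq_zero gap_deriv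
  rw [add_zero] at this
  field_simp at this
  linarith

theorem hasPeanoExpansionAt (h : IsHopfLaxFamily ℓ g) (ht : t ∈ Ioo (0 : ℝ) 1) {q : ℝ}
    (hq : HasSecondPeanoDerivAt (g t) q t) : HasPeanoExpansionAt (g t) (ℓ ^ 2 / 2) q t := by
  obtain ⟨d, hd, hexp⟩ := hq
  rwa [h.deriv_eq ht hd] at hexp

theorem eventually_increment_le (h : IsHopfLaxFamily ℓ g) (hs : s ∈ Ioo (0 : ℝ) 1)
    (ht : t ∈ Ioo (0 : ℝ) 1) (hst : s < t) :
    ∀ᶠ ε in 𝓝 0, g s (s + ε) - g s s ≤ g t (t + ε) - g t t := by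
  have := h.isLocalMin_gap hs ht hst 1 1
  filter_upwards [this] with ε hε
  simp only [one_mul, mul_zero, add_zero, sub_self, zero_mul] at hε
  linarith

theorem hasPeanoExpansionAt_of_frequently (h : IsHopfLaxFamily ℓ g) (ht : t ∈ Ioo (0 : ℝ) 1)
    (hz : ContinuousAt z t)
    (hleft : ∃ᶠ s in 𝓝[<] t, HasSecondPeanoDerivAt (g s) (z s) s)
    (hright : ∃ᶠ r in 𝓝[>] t, HasSecondPeanoDerivAt (g r) (z r) r) :
    HasPeanoExpansionAt (g t) (ℓ ^ 2 / 2) (z t) t := by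
  refine hasPeanoExpansionAt_iff_eventually.2 ⟨fun p hp => ?_, fun p hp => ?_⟩
  · obtain ⟨s, hexp, hps, hs⟩ := (hleft.and_eventually
      ((hz.eventually_const_lt hp).filter_mono nhdsWithin_le_nhds |>.and
        (Ioo_mem_nhdsLT ht.1))).exists
    have hs01 : s ∈ Ioo (0 : ℝ) 1 := ⟨hs.1, hs.2.trans ht.2⟩
    filter_upwards [h.eventually_increment_le hs01 ht hs.2,
      (hasPeanoExpansionAt_iff_eventually.1 (h.hasPeanoExpansionAt hs01 hexp)).1 p hps]
      with ε hmono hlower using hlower.trans hmono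
  · obtain ⟨r, hexp, hpr, hr⟩ := (hright.and_eventually
      ((hz.eventually_lt_const hp).filter_mono nhdsWithin_le_nhds |>.and
        (Ioo_mem_nhdsGT ht.2))).exists
    have hr01 : r ∈ Ioo (0 : ℝ) 1 := ⟨ht.1.trans hr.1, hr.2⟩
    filter_upwards [h.eventually_increment_le ht hr01 hr.1,
      (hasPeanoExpansionAt_iff_eventually.1 (h.hasPeanoExpansionAt hr01 hexp)).2 p hpr]
      with ε hmono hupper using hmono.trans hupper

theorem hasSecondPeanoDerivAt_of_dense (h : IsHopfLaxFamily ℓ g)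
    (hz : ContinuousOn z (Ioo 0 1))
    (hdense : Dense {t | t ∈ Ioo (0 : ℝ) 1 → HasSecondPeanoDerivAt (g t) (z t) t})
    (ht : t ∈ Ioo (0 : ℝ) 1) : HasSecondPeanoDerivAt (g t) (z t) t := by
  refine (h.hasPeanoExpansionAt_of_frequently ht (hz.continuousAt (Ioo_mem_nhds ht.1 ht.2))
    ?_ ?_).hasSecondPeanoDerivAt
  · refine ((frequently_nhdsLT_mem_of_dense hdense t).and_eventually (Ioo_mem_nhdsLT ht.1)).mono ?_
    exact fun s ⟨hexp, hs⟩ => hexp ⟨hs.1, hs.2.trans ht.2⟩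
  · refine ((frequently_nhdsGT_mem_of_dense hdense t).and_eventually (Ioo_mem_nhdsGT ht.2)).mono ?_
    exact fun r ⟨hexp, hr⟩ => hexp ⟨ht.1.trans hr.1, hr.2⟩

/-! ### The third-order inequality -/

theorem quadratic_nonneg (h : IsHopfLaxFamily ℓ g) (hs : s ∈ Ioo (0 : ℝ) 1)
    (ht : t ∈ Ioo (0 : ℝ) 1) (hst : s < t) {p q : ℝ} (hp : HasSecondPeanoDerivAt (g s) p s)
    (hq : HasSecondPeanoDerivAt (g t) q t) (u v : ℝ) :
    0 ≤ q * u ^ 2 - p * v ^ 2 + ℓ ^ 2 / (t - s) * (u - v) ^ 2 := by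
  have hts : t - s ≠ 0 := sub_ne_zero.2 hst.ne'
  have gap_expansion := (((h.hasPeanoExpansionAt ht hq).comp_add_mul u).sub
    ((h.hasPeanoExpansionAt hs hp).comp_add_mul v)).add
    (((hasPeanoExpansionAt_inv hts).comp_add_mul (u - v)).const_mul (ℓ ^ 2 / 2 * (t - s) ^ 2))
  convert gap_expansion.nonneg_of_isLocalMin (h.isLocalMin_gap hs ht hst u v) using 2
  field_simp

theorem secondPeanoDeriv_le (h : IsHopfLaxFamily ℓ g) (hs : s ∈ Ioo (0 : ℝ) 1)
    (ht : t ∈ Ioo (0 : ℝ) 1) (hst : s < t) {p q : ℝ} (hp : HasSecondPeanoDerivAt (g s) p s)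
    (hq : HasSecondPeanoDerivAt (g t) q t) : p ≤ q := by
  linarith [h.quadratic_nonneg hs ht hst hp hq 1 1]

theorem secondPeanoDeriv_mul_mul_sub_le (h : IsHopfLaxFamily ℓ g) (hs : s ∈ Ioo (0 : ℝ) 1)
    (ht : t ∈ Ioo (0 : ℝ) 1) (hst : s < t) {p q : ℝ} (hp : HasSecondPeanoDerivAt (g s) p s)
    (hq : HasSecondPeanoDerivAt (g t) q t) : p * q * (t - s) ≤ ℓ ^ 2 * (q - p) := by
  have hts : 0 < t - s := sub_pos.2 hst
  set a := ℓ ^ 2 / (t - s) with ha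
  have hdiscrim : discrim (q + a) (-2 * a) (a - p) ≤ 0 :=
    discrim_le_zero fun u => by linarith [h.quadratic_nonneg hs ht hst hp hq u 1]
  have hpq : p * q ≤ a * (q - p) := by
    rw [discrim] at hdiscrim
    linarith
  calc p * q * (t - s) ≤ a * (q - p) * (t - s) := by gcongr
    _ = ℓ ^ 2 * (q - p) := by rw [ha]; field_simp

theorem neg_sq_le_mul (h : IsHopfLaxFamily ℓ g)
    (hz : ∀ t ∈ Ioo (0 : ℝ) 1, HasSecondPeanoDerivAt (g t) (z t) t) (ht : t ∈ Ioo (0 : ℝ) 1) :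
    -ℓ ^ 2 ≤ t * z t := by
  have hlim : Tendsto (fun r => (t - r) * z t) (𝓝[>] 0) (𝓝 ((t - 0) * z t)) :=
    (show Continuous fun r => (t - r) * z t by fun_prop).continuousWithinAt
  rw [sub_zero] at hlim
  refine ge_of_tendsto hlim ?_
  filter_upwards [Ioo_mem_nhdsGT ht.1] with r hr
  have hr01 : r ∈ Ioo (0 : ℝ) 1 := ⟨hr.1, hr.2.trans ht.2⟩
  have htr : 0 < t - r := sub_pos.2 hr.2
  have := h.quadratic_nonneg hr01 ht hr.2 (hz r hr01) (hz t ht) 1 0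
  rw [← div_le_iff₀' htr, neg_div]
  linarith

theorem one_sub_mul_le_sq (h : IsHopfLaxFamily ℓ g)
    (hz : ∀ t ∈ Ioo (0 : ℝ) 1, HasSecondPeanoDerivAt (g t) (z t) t) (ht : t ∈ Ioo (0 : ℝ) 1) :
    (1 - t) * z t ≤ ℓ ^ 2 := by
  have hlim : Tendsto (fun r => (r - t) * z t) (𝓝[<] 1) (𝓝 ((1 - t) * z t)) :=
    (show Continuous fun r => (r - t) * z t by fun_prop).continuousWithinAt
  refine le_of_tendsto hlim ?_
  filter_upwards [Ioo_mem_nhdsLT ht.2] with r hr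
  have hr01 : r ∈ Ioo (0 : ℝ) 1 := ⟨ht.1.trans hr.1, hr.2⟩
  have hrt : 0 < r - t := sub_pos.2 hr.1
  have := h.quadratic_nonneg ht hr01 hr.1 (hz t ht) (hz r hr01) 0 1
  rw [← le_div_iff₀' hrt]
  linarith

theorem sqrt_mul_abs_mul_abs_div_le_slope (h : IsHopfLaxFamily ℓ g) (hℓ : ℓ ≠ 0)
    (hz : ∀ t ∈ Ioo (0 : ℝ) 1, HasSecondPeanoDerivAt (g t) (z t) t)
    (hs : 0 < s) (hst : s < t) (ht : t < 1) :
    √(s / t * ((1 - t) / (1 - s))) * (|z s| * |z t|) / ℓ ^ 2 ≤ (z t - z s) / (t - s) := by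
  have hs01 : s ∈ Ioo (0 : ℝ) 1 := ⟨hs, hst.trans ht⟩
  have ht01 : t ∈ Ioo (0 : ℝ) 1 := ⟨hs.trans hst, ht⟩
  rw [div_le_div_iff₀ (sq_pos_of_ne_zero hℓ) (sub_pos.2 hst), mul_comm (z t - z s)]
  exact sqrt_ratio_mul_abs_mul_abs_le hs hst.le ht
    (h.secondPeanoDeriv_le hs01 ht01 hst (hz s hs01) (hz t ht01))
    (h.secondPeanoDeriv_mul_mul_sub_le hs01 ht01 hst (hz s hs01) (hz t ht01))
    (h.neg_sq_le_mul hz hs01) (h.one_sub_mul_le_sq hz ht01)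

theorem sq_div_sq_le_of_hasDerivAt (h : IsHopfLaxFamily ℓ g) (hℓ : ℓ ≠ 0)
    (hz : ∀ t ∈ Ioo (0 : ℝ) 1, HasSecondPeanoDerivAt (g t) (z t) t) (ht : t ∈ Ioo (0 : ℝ) 1)
    {d : ℝ} (hd : HasDerivAt z d t) : z t ^ 2 / ℓ ^ 2 ≤ d := by
  have slope_tendsto : Tendsto (slope z t) (𝓝[>] t) (𝓝 d) :=
    (hasDerivWithinAt_iff_tendsto_slope' self_notMem_Ioi).1 hd.hasDerivWithinAt
  have product_tendsto : Tendsto (fun r => z t * z r / ℓ ^ 2) (𝓝[>] t) (𝓝 (z t ^ 2 / ℓ ^ 2)) := by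
    rw [sq (z t)]
    exact ((hd.continuousAt.continuousWithinAt.tendsto).const_mul (z t)).div_const _
  refine le_of_tendsto_of_tendsto product_tendsto slope_tendsto ?_
  filter_upwards [Ioo_mem_nhdsGT ht.2] with r hr
  have hr01 : r ∈ Ioo (0 : ℝ) 1 := ⟨ht.1.trans hr.1, hr.2⟩
  rw [slope_def_field, div_le_div_iff₀ (sq_pos_of_ne_zero hℓ) (sub_pos.2 hr.1),
    mul_comm (z r - z t)]
  exact h.secondPeanoDeriv_mul_mul_sub_le ht hr01 hr.1 (hz t ht) (hz r hr01)

end IsHopfLaxFamily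

/-! ### Kantorovich potentials along a geodesic -/

section Metric

variable {X : Type*} [MetricSpace X] {φ φc : X → ℝ} {γ : ℝ → X} {a b t : ℝ}

theorem dist_sq_div_le_add (ha : 0 < a) (hb : 0 < b) (x y z : X) :
    dist x z ^ 2 / (2 * (a + b)) ≤ dist x y ^ 2 / (2 * a) + dist y z ^ 2 / (2 * b) := by
  have sedrakyan := Finset.sq_sum_div_le_sum_sq_div (Finset.univ : Finset (Fin 2))
    ![dist x y, dist y z] (g := ![2 * a, 2 * b]) (by simp [Fin.forall_fin_two, ha, hb])
  simp only [Fin.sum_univ_two, Matrix.cons_val_zero, Matrix.cons_val_one] at sedrakyan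
  rw [← mul_add] at sedrakyan
  refine le_trans ?_ sedrakyan
  gcongr
  exact dist_triangle x y z

theorem IsCTransform.add_le (h : IsCTransform φ φc) (x y : X) :
    φ x + φc y ≤ dist x y ^ 2 / 2 := by
  have := (h y).1 ⟨x, rfl⟩
  rw [dist_comm y x] at this
  linarith

theorem IsGeodesic.reverse (h : IsGeodesic γ) : IsGeodesic fun t => γ (1 - t) := by
  intro s hs t ht
  have := h (1 - s) ⟨by linarith [hs.2], by linarith [hs.1]⟩ (1 - t)
    ⟨by linarith [ht.2], by linarith [ht.1]⟩
  rw [sub_sub_sub_cancel_left, abs_sub_comm] at this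
  simpa only [sub_zero, sub_self, dist_comm (γ 1)] using this

theorem IsKantorovichGeodesic.reverse (h : IsKantorovichGeodesic φ φc γ) :
    IsKantorovichGeodesic φc φ fun t => γ (1 - t) := by
  refine ⟨h.1.reverse, ?_⟩
  simp only [sub_zero, sub_self]
  rw [add_comm, dist_comm, h.2]

theorem reversePotential_eq_neg_interpPotential (φc : X → ℝ) (t : ℝ) (x : X) :
    reversePotential φc t x = -interpPotential φc (1 - t) x := by
  simp only [reversePotential, interpPotential, sub_eq_zero, eq_comm (a := (1 : ℝ))]
  split_ifs
  · rfl
  · rw [neg_neg]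

theorem interpPotential_le (ht : 0 < t) {x : X} {M : ℝ}
    (h : ∀ y, φ y - dist x y ^ 2 / (2 * t) ≤ M) : interpPotential φ t x ≤ M := by
  rw [interpPotential, if_neg ht.ne', neg_le]
  refine le_csInf ⟨_, x, rfl⟩ ?_
  rintro _ ⟨y, rfl⟩
  linarith [h y]

theorem le_interpPotential (hadm : ∀ x y, φ x + φc y ≤ dist x y ^ 2 / 2) (ht0 : 0 < t)
    (ht1 : t ≤ 1) (x y : X) : φ y - dist x y ^ 2 / (2 * t) ≤ interpPotential φ t x := by
  have hbdd : BddBelow {v : ℝ | ∃ y : X, v = dist x y ^ 2 / (2 * t) - φ y} := by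
    refine ⟨φc x, ?_⟩
    rintro _ ⟨w, rfl⟩
    have : dist w x ^ 2 / 2 ≤ dist x w ^ 2 / (2 * t) := by
      rw [dist_comm]
      gcongr
      linarith
    linarith [hadm w x]
  rw [interpPotential, if_neg ht0.ne', le_neg]
  exact (csInf_le hbdd ⟨y, rfl⟩).trans_eq (neg_sub _ _).symm

theorem interpPotential_le_add (hadm : ∀ x y, φ x + φc y ≤ dist x y ^ 2 / 2) (ha : 0 < a)
    (hab : a < b) (hb : b ≤ 1) (x x' : X) :
    interpPotential φ a x ≤ interpPotential φ b x' + dist x' x ^ 2 / (2 * (b - a)) := by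
  refine interpPotential_le ha fun y => ?_
  have hdist := dist_sq_div_le_add (sub_pos.2 hab) ha x' x y
  rw [sub_add_cancel] at hdist
  linarith [le_interpPotential hadm (ha.trans hab) hb x' y]

theorem interpPotential_geodesic (hadm : ∀ x y, φ x + φc y ≤ dist x y ^ 2 / 2)
    (hγ : IsKantorovichGeodesic φ φc γ) (ht : t ∈ Ioo (0 : ℝ) 1) :
    interpPotential φ t (γ t) = φ (γ 0) - dist (γ 0) (γ 1) ^ 2 / 2 * t := by
  have ht1 : 0 < 1 - t := sub_pos.2 ht.2
  have dist_left : dist (γ t) (γ 0) ^ 2 / (2 * t) = dist (γ 0) (γ 1) ^ 2 / 2 * t := by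
    rw [hγ.1 t (Ioo_subset_Icc_self ht) 0 (by simp), mul_pow, sq_abs, sub_zero]
    have := ht.1.ne'
    field_simp
  have dist_right : dist (γ t) (γ 1) ^ 2 / (2 * (1 - t)) = dist (γ 0) (γ 1) ^ 2 / 2 * (1 - t) := by
    rw [hγ.1 t (Ioo_subset_Icc_self ht) 1 (by simp), mul_pow, sq_abs, sub_sq_comm]
    field_simp
  apply le_antisymm
  · refine interpPotential_le ht.1 fun y => ?_
    have hdist := dist_sq_div_le_add ht.1 ht1 y (γ t) (γ 1)
    rw [add_sub_cancel, mul_one, dist_comm y (γ t), dist_right] at hdist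
    linarith [hadm y (γ 1), hγ.2]
  · have := le_interpPotential hadm ht.1 ht.2.le (γ t) (γ 0)
    rwa [dist_left] at this

theorem isHopfLaxFamily_interpPotential (hadm : ∀ x y, φ x + φc y ≤ dist x y ^ 2 / 2)
    (hγ : IsKantorovichGeodesic φ φc γ) :
    IsHopfLaxFamily (dist (γ 0) (γ 1)) fun t τ => interpPotential φ τ (γ t) := by
  refine ⟨fun s hs t ht => ?_, fun s hs t ht a ha b hb hab => ?_⟩
  · rw [interpPotential_geodesic hadm hγ hs, interpPotential_geodesic hadm hγ ht]
    ring
  · have hba : b - a ≠ 0 := sub_ne_zero.2 hab.ne'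
    refine (interpPotential_le_add hadm ha.1 hab hb.2.le (γ s) (γ t)).trans_eq ?_
    rw [hγ.1 t (Ioo_subset_Icc_self ht) s (Ioo_subset_Icc_self hs), mul_pow, sq_abs]
    field_simp

theorem isHopfLaxFamily_reversePotential (hadm : ∀ x y, φ x + φc y ≤ dist x y ^ 2 / 2)
    (hγ : IsKantorovichGeodesic φ φc γ) :
    IsHopfLaxFamily (dist (γ 0) (γ 1)) fun t τ => reversePotential φc τ (γ t) := by
  have hadm' (x y : X) : φc x + φ y ≤ dist x y ^ 2 / 2 := by
    rw [add_comm, dist_comm]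
    exact hadm y x
  have := (isHopfLaxFamily_interpPotential hadm' hγ.reverse).reverse
  simpa only [reversePotential_eq_neg_interpPotential, sub_sub_cancel, sub_zero, sub_self,
    dist_comm (γ 1)] using this

end Metric

theorem statement11_general {X : Type*} [MetricSpace X] {φ φc : X → ℝ}
    (hadm : ∀ x y, φ x + φc y ≤ dist x y ^ 2 / 2)
    {γ : ℝ → X} (hγ : IsKantorovichGeodesic φ φc γ) (hl : 0 < dist (γ 0) (γ 1))
    {zc : ℝ → ℝ} (hzc : ContinuousOn zc (Ioo 0 1))
    (hdense : Dense {t | t ∈ Ioo (0 : ℝ) 1 →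
      HasSecondPeanoDerivAt (fun τ => interpPotential φ τ (γ t)) (zc t) t ∧
      HasSecondPeanoDerivAt (fun τ => reversePotential φc τ (γ t)) (zc t) t}) :
    (∀ t ∈ Ioo (0 : ℝ) 1,
        HasSecondPeanoDerivAt (fun τ => interpPotential φ τ (γ t)) (zc t) t ∧
        HasSecondPeanoDerivAt (fun τ => reversePotential φc τ (γ t)) (zc t) t) ∧
      (∀ s t : ℝ, 0 < s → s < t → t < 1 →
        (zc t - zc s) / (t - s)
          ≥ √(s / t * ((1 - t) / (1 - s))) * (|zc s| * |zc t|) / dist (γ 0) (γ 1) ^ 2) ∧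
      (∀ t ∈ Ioo (0 : ℝ) 1, ∀ d : ℝ, HasDerivAt zc d t →
        d ≥ zc t ^ 2 / dist (γ 0) (γ 1) ^ 2) := by
  have hinterp := isHopfLaxFamily_interpPotential hadm hγ
  have hreverse := isHopfLaxFamily_reversePotential hadm hγ
  have peano_interp : ∀ t ∈ Ioo (0 : ℝ) 1, HasSecondPeanoDerivAt _ (zc t) t := fun t ht =>
    hinterp.hasSecondPeanoDerivAt_of_dense hzc (hdense.mono fun _ h hr => (h hr).1) ht
  have peano_reverse : ∀ t ∈ Ioo (0 : ℝ) 1, HasSecondPeanoDerivAt _ (zc t) t := fun t ht =>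
    hreverse.hasSecondPeanoDerivAt_of_dense hzc (hdense.mono fun _ h hr => (h hr).2) ht
  exact ⟨fun t ht => ⟨peano_interp t ht, peano_reverse t ht⟩,
    fun s t => hinterp.sqrt_mul_abs_mul_abs_div_le_slope hl.ne' peano_interp,
    fun t ht d => hinterp.sq_div_sq_le_of_hasDerivAt hl.ne' peano_interp ht⟩

/-- Third-order information on intermediate-time Kantorovich potentials. If `z_c` is
continuous on `(0,1)` and for a.e. `t ∈ (0,1)` both `τ ↦ φ_τ(γ_t)` and `τ ↦ φ̄_τ(γ_t)`
have second Peano derivative `z_c(t)` at `τ = t`, then: (i) this holds for every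
`t ∈ (0,1)`; (ii) `(z_c(t)-z_c(s))/(t-s) ≥ √((s/t)·((1-t)/(1-s)))·|z_c(s)|·|z_c(t)|/ℓ²`
for `0 < s < t < 1`; (iii) `z_c'(t) ≥ z_c(t)²/ℓ²` wherever `z_c` is differentiable. -/
theorem statement11 {X : Type*} [MetricSpace X] [ProperSpace X]
    (hgeo : IsGeodesicSpace X) (φ φc : X → ℝ) (hpair : IsKantorovichPair φ φc)
    (γ : ℝ → X) (hγ : IsKantorovichGeodesic φ φc γ)
    (hl : 0 < dist (γ 0) (γ 1))
    (zc : ℝ → ℝ) (hzc : ContinuousOn zc (Set.Ioo (0:ℝ) 1))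
    (hae : ∀ᵐ t ∂((MeasureTheory.volume : MeasureTheory.Measure ℝ).restrict
        (Set.Ioo (0:ℝ) 1)),
      HasSecondPeanoDerivAt (fun τ => interpPotential φ τ (γ t)) (zc t) t ∧
      HasSecondPeanoDerivAt (fun τ => reversePotential φc τ (γ t)) (zc t) t) :
    (∀ t ∈ Set.Ioo (0:ℝ) 1,
        HasSecondPeanoDerivAt (fun τ => interpPotential φ τ (γ t)) (zc t) t ∧
        HasSecondPeanoDerivAt (fun τ => reversePotential φc τ (γ t)) (zc t) t) ∧
      (∀ s t : ℝ, 0 < s → s < t → t < 1 →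
        (zc t - zc s) / (t - s)
          ≥ Real.sqrt (s / t * ((1 - t) / (1 - s))) * (|zc s| * |zc t|)
              / dist (γ 0) (γ 1) ^ 2) ∧
      (∀ t ∈ Set.Ioo (0:ℝ) 1, ∀ d : ℝ, HasDerivAt zc d t →
        d ≥ zc t ^ 2 / dist (γ 0) (γ 1) ^ 2) := by
  exact statement11_general hpair.1.add_le hγ hl hzc
    (Measure.dense_of_ae ((ae_restrict_iff' measurableSet_Ioo).1 hae))
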